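/- Let n ≥ 3 and let x_1, …, x_n be distinct real numbers. If θ̂ ∈ ℍ maximizes the Cauchy likelihood L over ℍ (i.e., L(θ) ≤ L(θ̂) for all θ ∈ ℍ), then n·h(θ̂) − (θ̂ − conj(θ̂))·h'(θ̂) = 0, where h'(θ) denotes the derivative of the polynomial h at θ. -/

import Mathlib

open Complex Finset

/-- The Cauchy likelihood of the sample `x` at parameter `θ = μ + iσ`. -/
noncomputable def cauchyL {n : ℕ} (x : Fin n → ℝ) (θ : ℂ) : ℝ :=
  ∏ j, (θ.im / Real.pi) / ((x j - θ.re) ^ 2 + θ.im ^ 2)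

/-- The polynomial `h(θ) = ∏ (x_j − θ)`. -/
noncomputable def hpoly {n : ℕ} (x : Fin n → ℝ) : ℂ → ℂ :=
  fun θ => ∏ j, ((x j : ℂ) - θ)

theorem log_cauchyL {n : ℕ} (x : Fin n → ℝ) (θ : ℂ) (h : 0 < θ.im) :
    Real.log (cauchyL x θ) =
      ∑ j, (Real.log θ.im - Real.log Real.pi - Real.log ((x j - θ.re) ^ 2 + θ.im ^ 2)) := by
  unfold cauchyL
  have hD : ∀ j, (x j - θ.re) ^ 2 + θ.im ^ 2 ≠ 0 := fun j => by positivity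
  have hp := Real.pi_pos
  rw [Real.log_prod (fun j _ => div_ne_zero (by positivity) (hD j))]
  refine Finset.sum_congr rfl fun j _ => ?_
  rw [Real.log_div (by positivity) (hD j), Real.log_div h.ne' hp.ne']

theorem cauchyL_pos {n : ℕ} (x : Fin n → ℝ) (θ : ℂ) (h : 0 < θ.im) : 0 < cauchyL x θ := by
  have hp := Real.pi_pos
  exact Finset.prod_pos fun j _ => by positivity

theorem crit {n : ℕ} (x : Fin n → ℝ) (m s : ℝ) (hs : 0 < s)
    (hmax : ∀ θ : ℂ, 0 < θ.im → cauchyL x θ ≤ cauchyL x ⟨m, s⟩) (a b : ℝ) :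
    ∑ j, (b / s - (-2 * (x j - m) * a + 2 * s * b) / ((x j - m) ^ 2 + s ^ 2)) = 0 := by
  let F : ℝ → ℝ := fun t => ∑ j, (Real.log (s + t * b) - Real.log Real.pi
    - Real.log ((x j - (m + t * a)) ^ 2 + (s + t * b) ^ 2))
  have hlin : ∀ c d : ℝ, HasDerivAt (fun t : ℝ => c + t * d) d 0 := fun c d => by
    simpa using ((hasDerivAt_id (0:ℝ)).mul_const d).const_add c
  have hF : HasDerivAt F (∑ j, (b / s - (-2 * (x j - m) * a + 2 * s * b) /
      ((x j - m) ^ 2 + s ^ 2))) 0 := by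
    refine HasDerivAt.fun_sum fun j _ => ?_
    have h1 := ((hlin s b).log (by simpa using hs.ne')).sub_const (Real.log Real.pi)
    have h2 := ((((hlin m a).const_sub (x j)).pow 2).add ((hlin s b).pow 2)).log
      (by simp; positivity)
    refine (h1.sub h2).congr_deriv ?_
    simp
  have hloc : IsLocalMax F 0 := by
    have hc : ContinuousAt (fun t : ℝ => s + t * b) 0 := (hlin s b).continuousAt
    have he : ∀ᶠ t in nhds (0:ℝ), 0 < s + t * b :=
      hc.eventually (lt_mem_nhds (by simpa using hs))
    filter_upwards [he] with t ht
    have h1 := log_cauchyL x ⟨m + t * a, s + t * b⟩ ht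
    have h2 := log_cauchyL x ⟨m, s⟩ hs
    have h3 := Real.log_le_log (cauchyL_pos x ⟨m + t * a, s + t * b⟩ ht) (hmax _ ht)
    rw [h1, h2] at h3
    simpa [F] using h3
  exact hloc.hasDerivAt_eq_zero hF

theorem deriv_hpoly {n : ℕ} (x : Fin n → ℝ) (θ : ℂ) (h : ∀ j, (x j : ℂ) - θ ≠ 0) :
    deriv (hpoly x) θ = hpoly x θ * ∑ j, -1 / ((x j : ℂ) - θ) := by
  have h1 : logDeriv (hpoly x) θ = ∑ j, logDeriv (fun t => (x j : ℂ) - t) θ := by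
    unfold hpoly
    exact logDeriv_prod (fun j _ => h j) (fun j _ => by fun_prop)
  have h0 : hpoly x θ ≠ 0 := Finset.prod_ne_zero_iff.2 fun j _ => h j
  rw [logDeriv_apply, div_eq_iff h0] at h1
  rw [h1, mul_comm]
  congr 1
  refine Finset.sum_congr rfl fun j _ => ?_
  rw [logDeriv_apply]
  simp [deriv_const_sub]

theorem stmt_0 (n : ℕ) (hn : 3 ≤ n) (x : Fin n → ℝ) (hx : Function.Injective x)
    (θhat : ℂ) (hθhat : 0 < θhat.im)
    (hmax : ∀ θ : ℂ, 0 < θ.im → cauchyL x θ ≤ cauchyL x θhat) :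
    (n : ℂ) * hpoly x θhat - (θhat - (starRingEnd ℂ) θhat) * deriv (hpoly x) θhat = 0 := by
  obtain ⟨m, s⟩ := θhat
  change 0 < s at hθhat
  have hne : ∀ j, (x j : ℂ) - ⟨m, s⟩ ≠ 0 := fun j h => by
    have := congrArg Complex.im h
    simp at this
    exact hθhat.ne' this
  rw [deriv_hpoly x _ hne]
  have hA := crit x m s hθhat hmax 1 0
  have hB := crit x m s hθhat hmax 0 1
  have key : (n : ℂ) - ((⟨m, s⟩ : ℂ) - (starRingEnd ℂ) ⟨m, s⟩) *
      ∑ j, -1 / ((x j : ℂ) - ⟨m, s⟩) = 0 := by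
    have e : (n : ℂ) - ((⟨m, s⟩ : ℂ) - (starRingEnd ℂ) ⟨m, s⟩) *
      ∑ j, -1 / ((x j : ℂ) - ⟨m, s⟩) = ∑ j, (⟨s * (1 / s - (-2 * (x j - m) * 0 + 2 * s * 1) / ((x j - m) ^ 2 + s ^ 2)), s * (0 / s - (-2 * (x j - m) * 1 + 2 * s * 0) / ((x j - m) ^ 2 + s ^ 2))⟩ : ℂ) := by
      have : (n : ℂ) = ∑ j : Fin n, (1 : ℂ) := by simp
      rw [this, Finset.mul_sum, ← Finset.sum_sub_distrib]
      refine Finset.sum_congr rfl fun j _ => ?_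
      have hD : (x j - m) ^ 2 + s ^ 2 ≠ 0 := by positivity
      rw [mul_div_assoc', sub_eq_iff_eq_add, eq_comm, ← eq_sub_iff_add_eq, eq_comm]
      rw [sub_eq_iff_eq_add, ← sub_eq_iff_eq_add', eq_div_iff (hne j)]
      apply Complex.ext
      · simp
        field_simp
        ring
      · simp
        field_simp
        ring
    rw [e]
    apply Complex.ext
    · rw [Complex.re_sum]
      simp only [← Finset.mul_sum, hB]
      simp
    · rw [Complex.im_sum]
      simp only [← Finset.mul_sum, hA]
      simp
  linear_combination hpoly x ⟨m, s⟩ * key
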